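/- arXiv:1501.02121 — 8 statements merged into one kernel-verified Lean document; each statement's English description precedes it below -/
import Mathlib

section
/- Let (X,d) be a Polish space and f a continuous semi-flow on X. If (X,f) is chaotic, then (X,f) has sensitive dependence on initial data: there exists a constant ε > 0 such that for every x ∈ X there is a dense Gδ subset S of X with limsup_{t→+∞} d(f^t(x), f^t(y)) ≥ ε for every y ∈ S. -/
open Filter Topology Metric Set TopologicalSpace

/-- `f` is a continuous semi-flow on `X`: jointly continuous on `[0,∞) × X`,
`f 0 x = x`, and `f s (f t x) = f (s+t) x` for `s, t ≥ 0`. -/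
def IsSemiflow {X : Type*} [MetricSpace X] (f : ℝ → X → X) : Prop :=
  ContinuousOn (fun p : ℝ × X => f p.1 p.2) (Set.Ici 0 ×ˢ Set.univ) ∧
  (∀ x, f 0 x = x) ∧
  (∀ s t : ℝ, 0 ≤ s → 0 ≤ t → ∀ x, f s (f t x) = f (s + t) x)

/-- the forward orbit `O₊(f,x) = {f t x : t ≥ 0}`. -/
def posOrbit {X : Type*} [MetricSpace X] (f : ℝ → X → X) (x : X) : Set X :=
  (fun t => f t x) '' Set.Ici (0 : ℝ)

/-- `x` is Birkhoff recurrent for `f`. -/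
def BirkhoffRecurrent {X : Type*} [MetricSpace X] (f : ℝ → X → X) (x : X) : Prop :=
  ∀ ε > (0:ℝ), ∃ T > (0:ℝ), ∀ τ ≥ (0:ℝ), ∀ υ ≥ (0:ℝ),
    ∃ t : ℝ, τ < t ∧ t < τ + T ∧ dist (f υ x) (f t x) < ε

/-- `f` is topologically quasi-transitive: some forward orbit is dense. -/
def QuasiTransitive {X : Type*} [MetricSpace X] (f : ℝ → X → X) : Prop :=
  ∃ x : X, Dense (posOrbit f x)

/-- `(X,f)` is chaotic: quasi-transitive, Birkhoff recurrent points dense, and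
two motions far away from each other. -/
def Chaotic {X : Type*} [MetricSpace X] (f : ℝ → X → X) : Prop :=
  QuasiTransitive f ∧ Dense {x : X | BirkhoffRecurrent f x} ∧
  ∃ x y : X, closure (posOrbit f x) ∩ closure (posOrbit f y) = ∅

lemma sf_cont {X : Type*} [MetricSpace X] {f : ℝ → X → X} (hf : IsSemiflow f) :
    Continuous (fun p : X × ℝ => f (max p.2 0) p.1) := by
  have h : Continuous (fun p : X × ℝ => ((max p.2 0, p.1) : ℝ × X)) := by fun_prop
  exact hf.1.comp_continuous h (fun p => ⟨mem_Ici.2 (le_max_right _ _), trivial⟩)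

lemma sf_cont_x {X : Type*} [MetricSpace X] {f : ℝ → X → X} (hf : IsSemiflow f)
    {t : ℝ} (ht : 0 ≤ t) : Continuous (f t) := by
  have h : Continuous (fun x : X => ((x, t) : X × ℝ)) := by fun_prop
  have := (sf_cont hf).comp h
  simpa [Function.comp_def, max_eq_left ht] using this

lemma sf_tube {X : Type*} [MetricSpace X] {f : ℝ → X → X} (hf : IsSemiflow f)
    (c : X) (T : ℝ) {ε : ℝ} (hε : 0 < ε) :
    ∀ᶠ y in 𝓝 c, ∀ s ∈ Icc (0:ℝ) T, dist (f s y) (f s c) < ε := by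
  have key : ∀ᶠ y in 𝓝 c, ∀ s ∈ Icc (0:ℝ) T,
      dist (f (max s 0) y) (f (max s 0) c) < ε := by
    apply isCompact_Icc.eventually_forall_of_forall_eventually
    intro s _
    have h1 : Continuous (fun p : X × ℝ => f (max p.2 0) c) :=
      (sf_cont hf).comp (by fun_prop : Continuous (fun p : X × ℝ => ((c, p.2) : X × ℝ)))
    have h2 := ((sf_cont hf).dist h1).tendsto (c, s)
    simp only [dist_self] at h2
    exact h2.eventually (gt_mem_nhds hε)
  filter_upwards [key] with y hy s hs
  simpa [max_eq_left hs.1] using hy s hs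

lemma sf_trans {X : Type*} [MetricSpace X] {f : ℝ → X → X} (hf : IsSemiflow f)
    (hq : QuasiTransitive f) (hd : Dense {x : X | BirkhoffRecurrent f x})
    {U V : Set X} (hU : IsOpen U) (hV : IsOpen V) (hUn : U.Nonempty) (hVn : V.Nonempty)
    (N : ℝ) : ∃ y ∈ U, ∃ t, N < t ∧ 0 ≤ t ∧ f t y ∈ V := by
  -- returning to an open neighbourhood
  have ret : ∀ z, BirkhoffRecurrent f z → ∀ W : Set X, IsOpen W → ∀ υ ≥ (0:ℝ), f υ z ∈ W →
      ∀ M : ℝ, ∃ t, M < t ∧ 0 ≤ t ∧ f t z ∈ W := by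
    intro z hz W hW υ hυ hm M
    obtain ⟨ε, hε, hb⟩ := Metric.isOpen_iff.1 hW _ hm
    obtain ⟨T, hT, h⟩ := hz ε hε
    obtain ⟨t, h1, _, h3⟩ := h (max M 0) (le_max_right _ _) υ hυ
    refine ⟨t, (le_max_left _ _).trans_lt h1, (le_max_right M 0).trans h1.le, hb ?_⟩
    rw [Metric.mem_ball, dist_comm]; exact h3
  obtain ⟨x, hx⟩ := hq
  obtain ⟨_, hs, ⟨s, hs0, rfl⟩⟩ := hx.inter_open_nonempty U hU hUn
  obtain ⟨_, ht, ⟨t, ht0, rfl⟩⟩ := hx.inter_open_nonempty V hV hVn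
  simp only [mem_Ici] at hs0 ht0
  simp only at hs ht
  have step : ∃ y ∈ U, ∃ r, 0 ≤ r ∧ f r y ∈ V := by
    rcases le_total s t with h | h
    · refine ⟨_, hs, t - s, by linarith, ?_⟩
      rw [hf.2.2 _ _ (by linarith) hs0]; simpa using ht
    · have h0 : 0 ≤ s - t := by linarith
      obtain ⟨z, ⟨hzV, hzU⟩, hz⟩ := hd.inter_open_nonempty (V ∩ f (s - t) ⁻¹' U)
        (hV.inter (hU.preimage (sf_cont_x hf h0)))
        ⟨f t x, ht, by
          simp only [mem_preimage]
          rw [hf.2.2 _ _ h0 ht0]; simpa using hs⟩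
      obtain ⟨r, hr, hr0, hrV⟩ := ret z hz V hV 0 le_rfl (by rwa [hf.2.1]) (s - t)
      refine ⟨_, hzU, r - (s - t), by linarith, ?_⟩
      rw [hf.2.2 _ _ (by linarith) h0]; simpa using hrV
  obtain ⟨y, hy, r, hr, hrV⟩ := step
  obtain ⟨z, ⟨hzU, hzV⟩, hz⟩ := hd.inter_open_nonempty (U ∩ f r ⁻¹' V)
    (hU.inter (hV.preimage (sf_cont_x hf hr))) ⟨y, hy, hrV⟩
  exact ⟨z, hzU, ret z hz V hV r hr hzV N⟩

lemma sf_compact {X : Type*} [MetricSpace X] [CompleteSpace X] {f : ℝ → X → X}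
    (hf : IsSemiflow f) {p : X} (hp : BirkhoffRecurrent f p) :
    IsCompact (closure (posOrbit f p)) := by
  refine TotallyBounded.isCompact_of_isClosed (TotallyBounded.closure ?_) isClosed_closure
  rw [Metric.totallyBounded_iff]
  intro ε hε
  obtain ⟨T, hT, h⟩ := hp (ε / 2) (by linarith)
  have hc : IsCompact ((fun s : ℝ => f (max s 0) p) '' Icc 0 T) :=
    isCompact_Icc.image
      ((sf_cont hf).comp (by fun_prop : Continuous (fun s : ℝ => ((p, s) : X × ℝ))))
  obtain ⟨F, hF, hcov⟩ := Metric.totallyBounded_iff.1 hc.totallyBounded (ε / 2) (by linarith)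
  refine ⟨F, hF, ?_⟩
  rintro _ ⟨υ, hυ, rfl⟩
  obtain ⟨t, h1, h2, h3⟩ := h 0 le_rfl υ hυ
  have := hcov ⟨t, ⟨h1.le, by linarith⟩, rfl⟩
  simp only [mem_iUnion, Metric.mem_ball, max_eq_left h1.le] at this ⊢
  obtain ⟨y, hy, hd⟩ := this
  exact ⟨y, hy, by linarith [dist_triangle (f υ p) (f t p) y]⟩

lemma sf_inv {X : Type*} [MetricSpace X] {f : ℝ → X → X} (hf : IsSemiflow f)
    {a c : X} (hc : c ∈ closure (posOrbit f a)) {s : ℝ} (hs : 0 ≤ s) :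
    f s c ∈ closure (posOrbit f a) := by
  refine map_mem_closure (sf_cont_x hf hs) hc ?_
  rintro _ ⟨t, ht, rfl⟩
  exact ⟨s + t, add_nonneg hs ht, (hf.2.2 s t hs ht a).symm⟩

lemma sf_min {X : Type*} [MetricSpace X] {f : ℝ → X → X} (hf : IsSemiflow f)
    {a p c : X} (hp : BirkhoffRecurrent f p) (hc : c ∈ closure (posOrbit f p))
    (hca : c ∈ closure (posOrbit f a)) : p ∈ closure (posOrbit f a) := by
  rw [← closure_closure, Metric.mem_closure_iff]
  intro ε hε
  obtain ⟨T, hT, h⟩ := hp (ε / 2) (by linarith)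
  obtain ⟨_, hy, ⟨t, ht, rfl⟩⟩ :=
    mem_closure_iff_nhds.1 hc _ (sf_tube hf c T (half_pos hε))
  simp only [mem_Ici] at ht
  obtain ⟨r, h1, h2, h3⟩ := h t ht 0 le_rfl
  have h4 := hy (r - t) ⟨by linarith, by linarith⟩
  simp only at h4
  rw [hf.2.2 _ _ (by linarith) ht, sub_add_cancel] at h4
  rw [hf.2.1] at h3
  exact ⟨f (r - t) c, sf_inv hf hca (by linarith),
    by linarith [dist_triangle p (f r p) (f (r - t) c)]⟩

lemma sf_pair {X : Type*} [MetricSpace X] [CompleteSpace X] {f : ℝ → X → X}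
    (hf : IsSemiflow f) (hc : Chaotic f) :
    ∃ δ > (0:ℝ), ∀ z : X, ∃ q : X, ∀ s ≥ (0:ℝ), δ ≤ dist z (f s q) := by
  obtain ⟨_, hd, a, b, hab⟩ := hc
  obtain ⟨p, -, hp⟩ := hd.inter_open_nonempty univ isOpen_univ ⟨a, trivial⟩
  have key : ∃ q, Disjoint (closure (posOrbit f p)) (closure (posOrbit f q)) := by
    by_contra! H
    obtain ⟨c, hc1, hc2⟩ := Set.not_disjoint_iff.1 (H a)
    obtain ⟨c', hc1', hc2'⟩ := Set.not_disjoint_iff.1 (H b)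
    have : p ∈ closure (posOrbit f a) ∩ closure (posOrbit f b) :=
      ⟨sf_min hf hp hc1 hc2, sf_min hf hp hc1' hc2'⟩
    rw [hab] at this
    exact this
  obtain ⟨q, hq⟩ := key
  obtain ⟨δ, hδ, hdis⟩ := hq.exists_thickenings (sf_compact hf hp) isClosed_closure
  refine ⟨δ, hδ, fun z => ?_⟩
  by_contra! H
  obtain ⟨s, hs, h1⟩ := H p
  obtain ⟨s', hs', h2⟩ := H q
  exact Set.disjoint_left.1 hdis
    (Metric.mem_thickening_iff.2 ⟨_, subset_closure ⟨s, hs, rfl⟩, h1⟩)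
    (Metric.mem_thickening_iff.2 ⟨_, subset_closure ⟨s', hs', rfl⟩, h2⟩)

/-- If `(X,f)` is chaotic on a Polish space, then it has sensitive
dependence on initial data. -/
theorem chaotic_implies_sensitive {X : Type*} [MetricSpace X] [CompleteSpace X]
    [SeparableSpace X] (f : ℝ → X → X) (hf : IsSemiflow f) (hc : Chaotic f) :
    ∃ ε : ℝ, 0 < ε ∧ ∀ x : X, ∃ S : Set X, Dense S ∧ IsGδ S ∧
      ∀ y ∈ S, (ε : EReal) ≤
        Filter.limsup (fun t : ℝ => (dist (f t x) (f t y) : EReal)) Filter.atTop := by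
  obtain ⟨δ, hδ, hpair⟩ := sf_pair hf hc
  obtain ⟨hq, hd, -⟩ := hc
  refine ⟨δ / 4, by linarith, fun x => ?_⟩
  let W : ℕ → Set X := fun N => ⋃ t ∈ Ioi (N : ℝ), {y | δ / 4 < dist (f t x) (f t y)}
  have hWo : ∀ N, IsOpen (W N) := by
    intro N
    refine isOpen_biUnion fun t ht => ?_
    have ht0 : 0 ≤ t := (Nat.cast_nonneg N).trans (le_of_lt ht)
    exact isOpen_lt continuous_const (continuous_const.dist (sf_cont_x hf ht0))
  have hWd : ∀ N, Dense (W N) := by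
    intro N
    rw [dense_iff_inter_open]
    intro U hU hUn
    obtain ⟨z, hzU, hz⟩ := hd.inter_open_nonempty U hU hUn
    obtain ⟨q, hqz⟩ := hpair z
    obtain ⟨T, hT, hret⟩ := hz (δ / 4) (by linarith)
    obtain ⟨V, hV, hVo, hqV⟩ := _root_.mem_nhds_iff.1 (sf_tube hf q T (ε := δ / 4) (by linarith))
    obtain ⟨y, hyU, k, hkN, hk0, hkV⟩ := sf_trans hf hq hd hU hVo hUn ⟨q, hqV⟩ N
    obtain ⟨t, h1, h2, h3⟩ := hret k hk0 0 le_rfl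
    have h4 := hV hkV (t - k) ⟨by linarith, by linarith⟩
    rw [hf.2.2 _ _ (by linarith) hk0, sub_add_cancel] at h4
    rw [hf.2.1] at h3
    have h5 := hqz (t - k) (by linarith)
    have htN : (N : ℝ) < t := hkN.trans h1
    by_cases h6 : δ / 4 < dist (f t x) (f t y)
    · exact ⟨y, hyU, mem_biUnion (show t ∈ Ioi (N : ℝ) from htN) h6⟩
    · refine ⟨z, hzU, mem_biUnion (show t ∈ Ioi (N : ℝ) from htN) ?_⟩
      show δ / 4 < dist (f t x) (f t z)
      have e1 := dist_triangle z (f t z) (f (t - k) q)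
      have e2 := dist_triangle (f t z) (f t y) (f (t - k) q)
      have e3 := dist_triangle_left (f t z) (f t y) (f t x)
      linarith
  refine ⟨⋂ N, W N, dense_iInter_of_isOpen hWo hWd, IsGδ.iInter_of_isOpen hWo, ?_⟩
  intro y hy
  refine le_limsup_of_frequently_le ?_
  rw [Filter.frequently_atTop]
  intro M
  obtain ⟨N, hN⟩ := exists_nat_ge M
  obtain ⟨t, ht, h⟩ := mem_iUnion₂.1 (mem_iInter.1 hy N)
  exact ⟨t, hN.trans (le_of_lt ht), EReal.coe_le_coe_iff.2 (le_of_lt h)⟩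
end

section
/- Let X be a nonempty Polish space without isolated points, and let R ⊆ X × X be a symmetric relation. If there is a dense Gδ subset A of X such that for each x ∈ A the section R(x) = {y ∈ X : (x,y) ∈ R} contains a dense Gδ subset of X, then there is a dense uncountable subset B of X such that (x,y) ∈ R whenever x, y ∈ B with x ≠ y. -/
open Filter Topology Metric Set TopologicalSpace

/-- Huang–Ye lemma: a symmetric relation whose sections over a
dense Gδ contain dense Gδ sets admits a dense uncountable "clique". -/
theorem huang_ye_lemma {X : Type*} [MetricSpace X] [CompleteSpace X]
    [SeparableSpace X] [Nonempty X] (hiso : ∀ x : X, (𝓝[≠] x).NeBot)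
    (R : Set (X × X)) (hsym : ∀ x y : X, (x, y) ∈ R → (y, x) ∈ R)
    (A : Set X) (hAd : Dense A) (hAg : IsGδ A)
    (hsec : ∀ x ∈ A, ∃ S : Set X, Dense S ∧ IsGδ S ∧ S ⊆ {y : X | (x, y) ∈ R}) :
    ∃ B : Set X, Dense B ∧ ¬ B.Countable ∧
      ∀ x ∈ B, ∀ y ∈ B, x ≠ y → (x, y) ∈ R := by
  haveI := hiso
  haveI : SecondCountableTopology X := UniformSpace.secondCountable_of_separable X
  have key : ∀ C : Set X, C.Countable → C ⊆ A → ∀ U : Set X, IsOpen U → U.Nonempty →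
      ∃ y ∈ U, y ∈ A ∧ y ∉ C ∧ ∀ x ∈ C, (x, y) ∈ R := by
    intro C hC hCA U hU hUn
    have h1 : A ∈ residual X := residual_of_dense_Gδ hAg hAd
    have h2 : (⋂ x ∈ C, {y : X | (x, y) ∈ R}) ∈ residual X := by
      rw [countable_bInter_mem hC]
      intro x hx
      obtain ⟨S, hSd, hSg, hSR⟩ := hsec x (hCA hx)
      exact mem_of_superset (residual_of_dense_Gδ hSg hSd) hSR
    have h3 : (⋂ x ∈ C, ({x}ᶜ : Set X)) ∈ residual X := by
      rw [countable_bInter_mem hC]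
      intro x hx
      exact residual_of_dense_open isOpen_compl_singleton (dense_compl_singleton x)
    have hd := dense_of_mem_residual (inter_mem h1 (inter_mem h2 h3))
    obtain ⟨y, hyU, hyA, hy2, hy3⟩ := hd.inter_open_nonempty U hU hUn
    simp only [mem_iInter] at hy2 hy3
    exact ⟨y, hyU, hyA, fun h => hy3 y h rfl, fun x hx => hy2 x hx⟩
  let r : X → X → Prop := fun x y => (x, y) ∈ R
  have hins : ∀ C : Set X, C.Pairwise r → ∀ y, (∀ x ∈ C, (x, y) ∈ R) →
      (insert y C).Pairwise r := by
    intro C hC y hy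
    rw [pairwise_insert]
    exact ⟨hC, fun x hx _ => ⟨hsym _ _ (hy x hx), hy x hx⟩⟩
  let K := {C : Set X // C.Countable ∧ C ⊆ A ∧ C.Pairwise r}
  obtain ⟨f, hf⟩ := (countable_countableBasis X).exists_eq_range (nonempty_of_mem
    (show _ ∈ countableBasis X from (isBasis_countableBasis X).exists_subset_of_mem_open
      (mem_univ (Classical.arbitrary X)) isOpen_univ |>.choose_spec.1))
  have hfm : ∀ n, f n ∈ countableBasis X := fun n => hf ▸ mem_range_self n
  have step : ∀ (n : ℕ) (C : K), ∃ D : K, C.1 ⊆ D.1 ∧ (D.1 ∩ f n).Nonempty := by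
    rintro n ⟨C, hC, hCA, hCr⟩
    obtain ⟨y, hyU, hyA, hyC, hyR⟩ := key C hC hCA (f n) (isOpen_of_mem_countableBasis (hfm n))
      (nonempty_of_mem_countableBasis (hfm n))
    exact ⟨⟨insert y C, hC.insert y, insert_subset hyA hCA, hins C hCr y hyR⟩,
      subset_insert _ _, y, mem_insert _ _, hyU⟩
  choose g hg1 hg2 using step
  let T : ℕ → K := fun n => Nat.rec ⟨∅, countable_empty, empty_subset _, pairwise_empty _⟩ g n
  have hT : Monotone (fun n => (T n).1) := monotone_nat_of_le_succ fun n => hg1 n (T n)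
  have hT0 : (⋃ n, (T n).1).Pairwise r := by
    rw [pairwise_iUnion hT.directed_le]
    exact fun n => (T n).2.2.2
  obtain ⟨B, hTB, hBmax⟩ := zorn_subset_nonempty {C : Set X | C ⊆ A ∧ C.Pairwise r}
    (by
      intro c hc hch _
      refine ⟨⋃₀ c, ⟨sUnion_subset fun s hs => (hc hs).1, ?_⟩, fun s hs => subset_sUnion_of_mem hs⟩
      rw [pairwise_sUnion hch.directedOn]
      exact fun s hs => (hc hs).2)
    (⋃ n, (T n).1) ⟨iUnion_subset fun n => (T n).2.2.1, hT0⟩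
  refine ⟨B, ?_, ?_, fun x hx y hy hxy => hBmax.prop.2 hx hy hxy⟩
  · rw [(isBasis_countableBasis X).dense_iff]
    intro o ho _
    rw [hf] at ho
    obtain ⟨n, rfl⟩ := ho
    obtain ⟨y, hy, hyf⟩ := hg2 n (T n)
    exact ⟨y, hyf, hTB (mem_iUnion.2 ⟨n + 1, hy⟩)⟩
  · intro hB
    obtain ⟨y, -, hyA, hyB, hyR⟩ := key B hB hBmax.prop.1 univ isOpen_univ univ_nonempty
    exact hyB (hBmax.le_of_ge ⟨insert_subset hyA hBmax.prop.1, hins B hBmax.prop.2 y hyR⟩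
      (subset_insert _ _) (mem_insert _ _))
end

section
/- Let (X,d) be a Polish space and f a continuous semi-flow on X. If f is topologically quasi-transitive and the Birkhoff recurrent points of f are dense in X, then f is topologically transitive: there exist z ∈ X and ε > 0 such that {f^t(z) : t ≥ ε} is dense in X. -/
open Filter Topology Metric Set TopologicalSpace

/-- quasi-transitivity together with density of Birkhoff recurrent
points implies topological transitivity. -/
theorem quasiTransitive_and_recurrent_dense_implies_transitive {X : Type*}
    [MetricSpace X] [CompleteSpace X] [SeparableSpace X]
    (f : ℝ → X → X) (hf : IsSemiflow f)
    (h1 : QuasiTransitive f) (h2 : Dense {x : X | BirkhoffRecurrent f x}) :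
    ∃ z : X, ∃ ε : ℝ, 0 < ε ∧ Dense ((fun t => f t z) '' Set.Ici ε) := by
  obtain ⟨hc, h0, hadd⟩ := hf
  obtain ⟨x, hx⟩ := h1
  refine ⟨x, 1, one_pos, ?_⟩
  set A : Set X := closure ((fun t => f t x) '' Set.Ici (1 : ℝ)) with hA
  have hcx : ContinuousOn (fun t => f t x) (Set.Icc (0 : ℝ) 1) := by
    have h : ContinuousOn (fun t : ℝ => ((t, x) : ℝ × X)) (Set.Icc (0 : ℝ) 1) := by fun_prop
    exact hc.comp h (fun t ht => ⟨ht.1, trivial⟩)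
  have hK : IsClosed ((fun t => f t x) '' Set.Icc (0 : ℝ) 1) :=
    (isCompact_Icc.image_of_continuousOn hcx).isClosed
  have hcover : ∀ y, y ∈ ((fun t => f t x) '' Set.Icc (0 : ℝ) 1) ∪ A := by
    intro y
    have hsub : posOrbit f x ⊆ ((fun t => f t x) '' Set.Icc (0 : ℝ) 1) ∪ A := by
      rintro _ ⟨t, ht, rfl⟩
      rcases le_total t 1 with h | h
      · exact Or.inl ⟨t, ⟨ht, h⟩, rfl⟩
      · exact Or.inr (subset_closure ⟨t, h, rfl⟩)
    exact closure_minimal hsub (hK.union isClosed_closure) (hx y)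
  by_contra hnd
  have hne : (Aᶜ).Nonempty := by
    by_contra hempty
    apply hnd
    intro y
    by_contra hy
    exact hempty ⟨y, hy⟩
  have hopen : IsOpen Aᶜ := isClosed_closure.isOpen_compl
  obtain ⟨y, hyU, hyR⟩ := h2.inter_open_nonempty _ hopen hne
  obtain ⟨ε, hε, hball⟩ := Metric.isOpen_iff.1 hopen y hyU
  obtain ⟨T, -, hrec⟩ := hyR ε hε
  obtain ⟨t, ht, -, hd⟩ := hrec 1 zero_le_one 0 le_rfl
  rw [h0] at hd
  rcases hcover y with ⟨s, hs, hsy⟩ | h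
  · have hsy' : f s x = y := hsy
    have hin : f t y ∈ Aᶜ := hball (by rw [Metric.mem_ball, dist_comm]; exact hd)
    apply hin
    rw [← hsy', hadd t s (by linarith) hs.1]
    exact subset_closure ⟨t + s, by have := hs.1; simp only [Set.mem_Ici]; linarith, rfl⟩
  · exact hyU h
end

section
/- Let (X,d) be a Polish space and f a continuous semi-flow on X. Suppose that: (1′) f is topologically transitive; (5) there exists an f-invariant Borel probability measure μ on X (μ((f^t)⁻¹(A)) = μ(A) for every Borel set A and every t ≥ 0) with μ(U) > 0 for every nonempty open subset U of X; and (3) there exist two points of X whose forward orbit closures are disjoint. Then (X,f) is sensitive in the sense of Guckenheimer: there exists ε > 0 such that for every x ∈ X and every neighborhood U of x, there exist y ∈ U and t > 0 with d(f^t(x), f^t(y)) ≥ ε. -/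
open Filter Topology Metric Set TopologicalSpace

lemma gw_syndetic {X : Type*} [MetricSpace X] [MeasurableSpace X] [BorelSpace X]
    (f : ℝ → X → X) (hf : IsSemiflow f) (hc : ∀ t, 0 ≤ t → Continuous (f t))
    (μ : MeasureTheory.Measure X) [MeasureTheory.IsProbabilityMeasure μ]
    (hinv : ∀ t ≥ (0:ℝ), ∀ A : Set X, MeasurableSet A → μ (f t ⁻¹' A) = μ A)
    (V : Set X) (hV : IsOpen V) (hμ : 0 < μ V) :
    ∃ L : ℝ, 0 ≤ L ∧ ∀ s, 0 ≤ s → ∃ l, 0 ≤ l ∧ l ≤ L ∧ ∃ w ∈ V, f (s + l) w ∈ V := by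
  by_contra! hcon
  have h1 : ∀ L : ℝ, ∃ s : ℝ, 0 ≤ L → (0 ≤ s ∧ ∀ l, 0 ≤ l → l ≤ L → ∀ w ∈ V, f (s + l) w ∉ V) := by
    intro L
    by_cases hL : 0 ≤ L
    · obtain ⟨s, hs⟩ := hcon L hL
      exact ⟨s, fun _ => hs⟩
    · exact ⟨0, fun h => absurd h hL⟩
  choose S hS using h1
  let r : ℕ → ℝ := fun n => Nat.rec 0 (fun _ x => x + S x) n
  have hr : ∀ n, r (n+1) = r n + S (r n) := fun n => rfl
  have hr0 : ∀ n, 0 ≤ r n := by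
    intro n
    induction n with
    | zero => exact le_refl _
    | succ k ih => rw [hr]; linarith [(hS (r k) ih).1]
  have hmono : Monotone r := by
    apply monotone_nat_of_le_succ
    intro n
    rw [hr]; linarith [(hS (r n) (hr0 n)).1]
  have hdis : ∀ i j, i < j → ∀ w, f (r i) w ∈ V → f (r j) w ∈ V → False := by
    intro i j hij w hi hj
    obtain ⟨k, rfl⟩ : ∃ k, j = k + 1 := ⟨j - 1, by omega⟩
    have hik : r i ≤ r k := hmono (by omega)
    have h := (hS (r k) (hr0 k)).2 (r k - r i) (by linarith) (by linarith [hr0 i]) _ hi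
    rw [hf.2.2 _ _ (by linarith [(hS (r k) (hr0 k)).1]) (hr0 i)] at h
    apply h
    have : S (r k) + (r k - r i) + r i = r (k+1) := by rw [hr]; ring
    rwa [this]
  obtain ⟨i, j, hij, w, hw⟩ := MeasureTheory.exists_nonempty_inter_of_measure_univ_lt_tsum_measure μ
    (s := fun n => f (r n) ⁻¹' V)
    (fun n => ((hV.preimage (hc _ (hr0 n))).measurableSet.nullMeasurableSet)) (by
      have : ∀ n, μ (f (r n) ⁻¹' V) = μ V := fun n => hinv _ (hr0 n) V hV.measurableSet
      simp only [this]
      rw [ENNReal.tsum_const_eq_top_of_ne_zero hμ.ne']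
      exact MeasureTheory.measure_lt_top _ _)
  rcases lt_or_gt_of_ne hij with h | h
  · exact hdis _ _ h w hw.1 hw.2
  · exact hdis _ _ h w hw.2 hw.1

/-- Glasner–Weiss, continuous-time version: transitivity, a fully
supported invariant probability measure, and two far-away motions imply
Guckenheimer sensitivity. -/
theorem glasner_weiss_sensitivity {X : Type*} [MetricSpace X] [CompleteSpace X]
    [SeparableSpace X] [MeasurableSpace X] [BorelSpace X]
    (f : ℝ → X → X) (hf : IsSemiflow f)
    (htrans : ∃ x : X, ∃ ε : ℝ, 0 < ε ∧ Dense ((fun t => f t x) '' Set.Ici ε))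
    (μ : MeasureTheory.Measure X) [MeasureTheory.IsProbabilityMeasure μ]
    (hinv : ∀ t ≥ (0:ℝ), ∀ A : Set X, MeasurableSet A → μ (f t ⁻¹' A) = μ A)
    (hpos : ∀ U : Set X, IsOpen U → U.Nonempty → 0 < μ U)
    (hfar : ∃ x y : X, closure (posOrbit f x) ∩ closure (posOrbit f y) = ∅) :
    ∃ ε : ℝ, 0 < ε ∧ ∀ x : X, ∀ U ∈ 𝓝 x, ∃ y ∈ U, ∃ t : ℝ, 0 < t ∧
      ε ≤ dist (f t x) (f t y) := by
  obtain ⟨x₀, e, he, hx₀⟩ := htrans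
  have hgc : Continuous (fun p : ℝ × X => f (max p.1 0) p.2) := by
    have h2 : Continuous (fun p : ℝ × X => (max p.1 0, p.2)) := by fun_prop
    exact hf.1.comp_continuous h2 (fun p => ⟨Set.mem_Ici.2 (le_max_right p.1 0), trivial⟩)
  have hc : ∀ t, 0 ≤ t → Continuous (f t) := by
    intro t ht
    have h2 : Continuous (fun x : X => f (max t 0) x) := hgc.comp (by fun_prop : Continuous fun x : X => (t, x))
    rwa [max_eq_left ht] at h2
  obtain ⟨y, hy⟩ : ∃ y, x₀ ∉ closure (posOrbit f y) := by
    obtain ⟨a, b, hab⟩ := hfar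
    by_contra! h
    have : x₀ ∈ closure (posOrbit f a) ∩ closure (posOrbit f b) := ⟨h a, h b⟩
    rw [hab] at this
    exact this
  obtain ⟨δ, hδ, hyδ⟩ : ∃ δ > 0, ∀ t, 0 ≤ t → δ ≤ dist x₀ (f t y) := by
    rw [Metric.mem_closure_iff] at hy
    push Not at hy
    obtain ⟨δ, hδ, h⟩ := hy
    exact ⟨δ, hδ, fun t ht => h _ ⟨t, ht, rfl⟩⟩
  by_contra! hns
  obtain ⟨z, U, hU, hz⟩ := hns (δ/6) (by linarith)
  obtain ⟨_, ⟨t₁, ht₁, rfl⟩, hU1⟩ := hx₀.exists_mem_open isOpen_interior ⟨z, mem_interior_iff_mem_nhds.2 hU⟩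
  have ht₁0 : 0 ≤ t₁ := he.le.trans ht₁
  -- equicontinuity at x₀
  have hA : ∀ᶠ w in 𝓝 x₀, ∀ t ∈ Set.Icc 0 t₁, dist (f (max t 0) x₀) (f (max t 0) w) < δ/3 := by
    refine isCompact_Icc.eventually_forall_of_forall_eventually ?_
    intro t _
    have h3 : Continuous (fun p : X × ℝ => dist (f (max p.2 0) x₀) (f (max p.2 0) p.1)) :=
      (hgc.comp (by fun_prop : Continuous fun p : X × ℝ => (p.2, x₀))).dist
        (hgc.comp (by fun_prop : Continuous fun p : X × ℝ => (p.2, p.1)))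
    exact h3.continuousAt.eventually_lt continuousAt_const (by simp; linarith)
  have hB : ∀ᶠ w in 𝓝 x₀, f t₁ w ∈ U :=
    (hc t₁ ht₁0).continuousAt.eventually (mem_interior_iff_mem_nhds.1 hU1)
  have hC : ∀ᶠ w in 𝓝 x₀, dist w x₀ < δ/3 := Metric.ball_mem_nhds x₀ (by linarith)
  obtain ⟨V, hVs, hVo, hxV⟩ := _root_.mem_nhds_iff.1 (hA.and (hB.and hC))
  have hequi : ∀ w ∈ V, ∀ t, 0 ≤ t → dist (f t x₀) (f t w) < δ/3 := by
    intro w hw t ht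
    obtain ⟨h1, h2, -⟩ := hVs hw
    rcases le_or_gt t t₁ with h | h
    · have := h1 t ⟨ht, h⟩
      rwa [max_eq_left ht] at this
    · have e1 := hz _ (interior_subset hU1) (t - t₁) (by linarith)
      have e2 := hz _ h2 (t - t₁) (by linarith)
      simp only [hf.2.2 (t - t₁) t₁ (by linarith) ht₁0, sub_add_cancel] at e1 e2
      have := dist_triangle_left (f t x₀) (f t w) (f (t - t₁) z)
      linarith
  obtain ⟨L, hL, hsyn⟩ := gw_syndetic f hf hc μ hinv V hVo (hpos V hVo ⟨x₀, hxV⟩)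
  have hT : ∀ᶠ w in 𝓝 y, ∀ l ∈ Set.Icc 0 L, 2*δ/3 < dist x₀ (f (max l 0) w) := by
    refine isCompact_Icc.eventually_forall_of_forall_eventually ?_
    intro l hl
    have h3 : Continuous (fun p : X × ℝ => dist x₀ (f (max p.2 0) p.1)) :=
      continuous_const.dist
        (hgc.comp (by fun_prop : Continuous fun p : X × ℝ => (p.2, p.1)))
    refine continuousAt_const.eventually_lt h3.continuousAt ?_
    have := hyδ (max l 0) (le_max_right _ _)
    show 2*δ/3 < dist x₀ (f (max l 0) y)
    linarith
  obtain ⟨W, hWs, hWo, hyW⟩ := _root_.mem_nhds_iff.1 hT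
  obtain ⟨_, ⟨s, hs, rfl⟩, hW1⟩ := hx₀.exists_mem_open hWo ⟨y, hyW⟩
  have hs0 : 0 ≤ s := he.le.trans hs
  obtain ⟨l, hl0, hlL, w, hwV, hwV'⟩ := hsyn s hs0
  have h1 := hWs hW1 l ⟨hl0, hlL⟩
  simp only [max_eq_left hl0] at h1
  rw [hf.2.2 l s hl0 hs0, add_comm] at h1
  have h2 := hequi w hwV (s + l) (by linarith)
  have h3 : dist (f (s + l) w) x₀ < δ/3 := (hVs hwV').2.2
  have h4 := dist_triangle (f (s+l) x₀) (f (s+l) w) x₀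
  rw [dist_comm] at h1
  linarith
end

section
/- Let (X,d) be a Polish space, f a continuous semi-flow on X, and x ∈ X a point with Σ = closure(O₊(f,x)) compact. Assume that the Birkhoff recurrent points of f lying in Σ are dense in Σ and that Σ is not minimal (there exists y ∈ Σ with closure(O₊(f,y)) ≠ Σ). Then there exists ε > 0 such that for every δ > 0 one can find y ∈ Σ with d(x,y) < δ for which the set {t ≥ 0 : d(f^t(x), f^t(y)) ≥ ε} has infinite Lebesgue measure. -/
open Filter Topology Metric Set TopologicalSpace

lemma posOrbit_closure_sub {X : Type*} [MetricSpace X] (f : ℝ → X → X) (hf : IsSemiflow f)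
    (hg : Continuous (fun p : ℝ × X => f (max p.1 0) p.2)) (a b : X)
    (h : a ∈ closure (posOrbit f b)) : closure (posOrbit f a) ⊆ closure (posOrbit f b) := by
  apply closure_minimal _ isClosed_closure
  rintro _ ⟨s, hs, rfl⟩
  have hs' : (0:ℝ) ≤ s := hs
  have hc : Continuous (fun z => f (max s 0) z) := hg.comp (Continuous.prodMk_right s)
  rw [max_eq_left hs'] at hc
  refine map_mem_closure hc h ?_
  rintro _ ⟨t, ht, rfl⟩
  have ht' : (0:ℝ) ≤ t := ht
  exact ⟨s + t, add_nonneg hs' ht', (hf.2.2 s t hs' ht' b).symm⟩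

lemma volume_top_of_intervals {S : Set ℝ} (hS : MeasurableSet S) {σ : ℝ} (hσ : 0 < σ)
    (h : ∀ n : ℕ, ∃ t : ℝ, (n:ℝ) ≤ t ∧ Icc t (t + σ) ⊆ S) : MeasureTheory.volume S = ⊤ := by
  by_contra hfin
  have hlim := MeasureTheory.tendsto_measure_iInter_atTop (μ := MeasureTheory.volume)
    (s := fun n : ℕ => S ∩ Ici (n:ℝ)) (fun n => (hS.inter measurableSet_Ici).nullMeasurableSet)
    (fun m n hmn => by
      apply inter_subset_inter_right
      exact Ici_subset_Ici.2 (by exact_mod_cast hmn))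
    ⟨0, ne_top_of_le_ne_top hfin (MeasureTheory.measure_mono inter_subset_left)⟩
  have he : (⋂ n : ℕ, S ∩ Ici (n:ℝ)) = ∅ := by
    ext u
    simp only [mem_iInter, mem_inter_iff, mem_Ici, mem_empty_iff_false, iff_false]
    intro hu
    obtain ⟨n, hn⟩ := exists_nat_gt u
    exact absurd (hu n).2 (not_le.2 hn)
  rw [he, MeasureTheory.measure_empty] at hlim
  have hge : ENNReal.ofReal σ ≤ 0 := by
    refine ge_of_tendsto' hlim (fun n => ?_)
    obtain ⟨t, ht, hsub⟩ := h n
    have : MeasureTheory.volume (Icc t (t + σ)) = ENNReal.ofReal σ := by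
      rw [Real.volume_Icc]; congr 1; ring
    rw [← this]
    exact MeasureTheory.measure_mono (subset_inter hsub (fun u hu => ht.trans hu.1))
  exact absurd (ENNReal.ofReal_pos.2 hσ) (not_lt.2 hge)

lemma exists_window {X : Type*} [MetricSpace X] (f : ℝ → X → X) (hf : IsSemiflow f)
    (hg : Continuous (fun p : ℝ × X => f (max p.1 0) p.2)) (x y : X)
    (hy : y ∈ closure (posOrbit f x)) (η : ℝ) (hη : 0 < η) (T τ₀ : ℝ) (hτ₀ : 0 ≤ τ₀) :
    ∃ τ, τ₀ ≤ τ ∧ ∀ s, 0 ≤ s → s ≤ T → infDist (f (τ + s) x) (posOrbit f y) < η := by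
  have hxc : Continuous (fun t => f (max t 0) x) := hg.comp (Continuous.prodMk_left x)
  have hsplit : posOrbit f x ⊆
      (fun t => f (max t 0) x) '' Icc 0 τ₀ ∪ (fun t => f t x) '' Ici τ₀ := by
    rintro _ ⟨t, ht, rfl⟩
    have ht' : (0:ℝ) ≤ t := ht
    rcases le_total t τ₀ with h | h
    · left; exact ⟨t, ⟨ht', h⟩, by simp [max_eq_left ht']⟩
    · right; exact ⟨t, h, rfl⟩
  have hy2 := closure_mono hsplit hy
  rw [closure_union, (isCompact_Icc.image hxc).isClosed.closure_eq] at hy2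
  rcases hy2 with ⟨a, ⟨ha0, ha1⟩, hay⟩ | hy2
  · refine ⟨τ₀, le_rfl, fun s hs _ => ?_⟩
    simp only [max_eq_left ha0] at hay
    have hm : f (τ₀ + s) x ∈ posOrbit f y := by
      refine ⟨τ₀ + s - a, by simp only [mem_Ici]; linarith, ?_⟩
      simp only
      rw [← hay, hf.2.2 _ _ (by linarith) ha0]
      congr 1; ring
    rw [infDist_zero_of_mem hm]; exact hη
  · have hev : ∀ᶠ z in 𝓝 y, ∀ s ∈ Icc (0:ℝ) T, dist (f (max s 0) z) (f (max s 0) y) < η := by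
      refine isCompact_Icc.eventually_forall_of_forall_eventually (fun s _ => ?_)
      have hc : Continuous (fun q : X × ℝ => dist (f (max q.2 0) q.1) (f (max q.2 0) y)) := by
        refine Continuous.dist (hg.comp (continuous_snd.prodMk continuous_fst))
          (hg.comp (continuous_snd.prodMk continuous_const))
      exact hc.continuousAt.eventually (gt_mem_nhds (by simpa using hη))
    obtain ⟨_, hz, ⟨τ, hτ, rfl⟩⟩ := mem_closure_iff_nhds.1 hy2 _ hev
    have hτ' : τ₀ ≤ τ := hτ
    refine ⟨τ, hτ', fun s hs hsT => ?_⟩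
    have h1 := hz s ⟨hs, hsT⟩
    simp only [max_eq_left hs] at h1
    rw [hf.2.2 s τ hs (hτ₀.trans hτ'), add_comm] at h1
    exact (infDist_le_dist_of_mem (show f s y ∈ posOrbit f y from ⟨s, hs, rfl⟩)).trans_lt h1

/-- Theorem A: a chaotic Lagrangian stable motion is observably
sensitive with observation times of infinite Lebesgue measure. -/
theorem thmA_observable_sensitivity {X : Type*} [MetricSpace X] [CompleteSpace X]
    [SeparableSpace X] (f : ℝ → X → X) (hf : IsSemiflow f) (x : X)
    (hcpt : IsCompact (closure (posOrbit f x)))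
    (hrec : closure (posOrbit f x) ⊆
      closure ({z : X | BirkhoffRecurrent f z} ∩ closure (posOrbit f x)))
    (hnm : ∃ y ∈ closure (posOrbit f x), closure (posOrbit f y) ≠ closure (posOrbit f x)) :
    ∃ ε : ℝ, 0 < ε ∧ ∀ δ > (0:ℝ), ∃ y ∈ closure (posOrbit f x), dist x y < δ ∧
      MeasureTheory.volume {t : ℝ | 0 ≤ t ∧ ε ≤ dist (f t x) (f t y)} = ⊤ := by
  have hg : Continuous (fun p : ℝ × X => f (max p.1 0) p.2) := by
    have := hf.1.comp_continuous (f := fun p : ℝ × X => (max p.1 0, p.2)) (by fun_prop)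
      (fun p => ⟨mem_Ici.2 (le_max_right _ _), mem_univ _⟩)
    exact this
  obtain ⟨y, hy, hne⟩ := hnm
  have hxy : x ∉ closure (posOrbit f y) := fun h =>
    hne ((posOrbit_closure_sub f hf hg y x hy).antisymm (posOrbit_closure_sub f hf hg x y h))
  have hyne : (posOrbit f y).Nonempty := ⟨_, 0, mem_Ici.2 le_rfl, rfl⟩
  have hpos : 0 < infDist x (posOrbit f y) := by
    refine lt_of_le_of_ne infDist_nonneg (fun h => hxy ?_)
    exact (mem_closure_iff_infDist_zero hyne).2 h.symm
  obtain ⟨η, hη⟩ : ∃ η, infDist x (posOrbit f y) = 4 * η :=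
    ⟨infDist x (posOrbit f y) / 4, by ring⟩
  have hη0 : 0 < η := by linarith
  refine ⟨η, hη0, fun δ hδ => ?_⟩
  have hxS : x ∈ closure (posOrbit f x) := subset_closure ⟨0, mem_Ici.2 le_rfl, hf.2.1 x⟩
  obtain ⟨p, ⟨hp, hpS⟩, hxp⟩ := Metric.mem_closure_iff.1 (hrec hxS) (min δ η) (lt_min hδ hη0)
  refine ⟨p, hpS, hxp.trans_le (min_le_left _ _), ?_⟩
  have hxp2 := hxp.trans_le (min_le_right _ _)
  have hmeas : MeasurableSet {t : ℝ | 0 ≤ t ∧ η ≤ dist (f t x) (f t p)} := by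
    have he : {t : ℝ | 0 ≤ t ∧ η ≤ dist (f t x) (f t p)} =
        Ici 0 ∩ {t : ℝ | η ≤ dist (f (max t 0) x) (f (max t 0) p)} := by
      ext t
      simp only [mem_setOf_eq, mem_inter_iff, mem_Ici]
      refine and_congr_right (fun ht => ?_)
      rw [max_eq_left ht]
    rw [he]
    refine (isClosed_Ici.inter (isClosed_le continuous_const ?_)).measurableSet
    exact (hg.comp (Continuous.prodMk_left x)).dist (hg.comp (Continuous.prodMk_left p))
  obtain ⟨r, hr, hloc⟩ := Metric.continuous_iff.1 hg (0, p) η hη0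
  have hloc2 : ∀ s z, 0 ≤ s → s < r → dist z p < r → dist (f s z) p < η := by
    intro s z hs hsr hz
    have := hloc (s, z) (by
      rw [Prod.dist_eq]
      refine max_lt ?_ hz
      simpa [Real.dist_eq, abs_of_nonneg hs] using hsr)
    simpa [max_eq_left hs, hf.2.1] using this
  obtain ⟨T, hT, hTr⟩ := hp r hr
  refine volume_top_of_intervals hmeas (half_pos hr) (fun n => ?_)
  obtain ⟨τ, hτ, hwin⟩ := exists_window f hf hg x y hy η hη0 (T + r) n (Nat.cast_nonneg n)
  have hτ0 : 0 ≤ τ := le_trans (Nat.cast_nonneg n) hτ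
  obtain ⟨t, ht1, ht2, ht3⟩ := hTr τ hτ0 0 le_rfl
  rw [hf.2.1, dist_comm] at ht3
  refine ⟨t, by linarith, fun u hu => ⟨by linarith [hu.1], ?_⟩⟩
  have h1 := hwin (u - τ) (by linarith [hu.1]) (by linarith [hu.2])
  rw [add_sub_cancel] at h1
  have h2 := hloc2 (u - t) (f t p) (by linarith [hu.1]) (by linarith [hu.2]) ht3
  rw [hf.2.2 _ _ (by linarith [hu.1]) (by linarith), sub_add_cancel] at h2
  have h3 : infDist x (posOrbit f y) ≤ infDist (f u x) (posOrbit f y) + dist x (f u x) :=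
    infDist_le_infDist_add_dist
  have h4 := dist_triangle4 x p (f u p) (f u x)
  rw [dist_comm p, dist_comm (f u p) (f u x)] at h4
  linarith
end

section
/- Let (X,d) be a compact metric space and f a continuous semi-flow on X. Let x, y ∈ X and ε > ε' > 0. If limsup_{t→+∞} d(f^t(x), f^t(y)) ≥ ε, then the set {t ≥ 0 : d(f^t(x), f^t(y)) ≥ ε'} has infinite Lebesgue measure. -/
open Filter Topology Metric Set TopologicalSpace

/-- on a compact space, limsup separation by `ε` gives a set of
`ε'`-separation times of infinite Lebesgue measure. -/
theorem compact_separation_times_infinite_measure {X : Type*} [MetricSpace X]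
    [CompactSpace X] (f : ℝ → X → X) (hf : IsSemiflow f) (x y : X)
    (ε ε' : ℝ) (hε' : 0 < ε') (hεε' : ε' < ε)
    (hls : (ε : EReal) ≤
      Filter.limsup (fun t : ℝ => (dist (f t x) (f t y) : EReal)) Filter.atTop) :
    MeasureTheory.volume {t : ℝ | 0 ≤ t ∧ ε' ≤ dist (f t x) (f t y)} = ⊤ := by
  obtain ⟨hc, h0, hadd⟩ := hf
  have hη : 0 < (ε - ε') / 3 := by linarith
  obtain ⟨δ, hδ, hδf⟩ : ∃ δ > (0:ℝ), ∀ s, 0 ≤ s → s ≤ δ → ∀ z, dist (f s z) z < (ε - ε') / 3 := by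
    have hK : IsCompact (Set.Icc (0:ℝ) 1 ×ˢ (Set.univ : Set X)) :=
      isCompact_Icc.prod isCompact_univ
    have hu := hK.uniformContinuousOn_of_continuous
      (hc.mono (Set.prod_mono Set.Icc_subset_Ici_self subset_rfl))
    rw [Metric.uniformContinuousOn_iff] at hu
    obtain ⟨δ, hδ, h⟩ := hu _ hη
    refine ⟨min (δ / 2) 1, by positivity, fun s hs hsδ z => ?_⟩
    have h1 : s ≤ δ / 2 := hsδ.trans (min_le_left _ _)
    have h2 : s ≤ 1 := hsδ.trans (min_le_right _ _)
    have := h (s, z) ⟨⟨hs, h2⟩, Set.mem_univ _⟩ (0, z) ⟨⟨le_rfl, zero_le_one⟩, Set.mem_univ _⟩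
      (by
        rw [Prod.dist_eq]
        simp only [dist_self, Real.dist_eq, sub_zero, abs_of_nonneg hs]
        exact max_lt (by linarith) hδ)
    simpa [h0] using this
  have hfreq : ∃ᶠ t : ℝ in Filter.atTop, ε - (ε - ε') / 3 < dist (f t x) (f t y) := by
    have hlt : ((ε - (ε - ε') / 3 : ℝ) : EReal) <
        Filter.limsup (fun t : ℝ => (dist (f t x) (f t y) : EReal)) Filter.atTop :=
      lt_of_lt_of_le (EReal.coe_lt_coe_iff.2 (by linarith)) hls
    exact (Filter.frequently_lt_of_lt_limsup (by isBoundedDefault) hlt).mono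
      fun t ht => EReal.coe_lt_coe_iff.1 ht
  set S := {t : ℝ | 0 ≤ t ∧ ε' ≤ dist (f t x) (f t y)} with hS
  have key : ∀ n : ℕ, ∃ T : ℝ, 0 ≤ T ∧
      (n : ENNReal) * ENNReal.ofReal δ ≤ MeasureTheory.volume (S ∩ Set.Iic T) := by
    intro n
    induction n with
    | zero => exact ⟨0, le_rfl, by simp⟩
    | succ n ih =>
      obtain ⟨T, hT, hv⟩ := ih
      obtain ⟨t, htT, ht⟩ := (Filter.frequently_atTop.1 hfreq) (T + 1)
      refine ⟨t + δ, by linarith, ?_⟩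
      have hsub : (S ∩ Set.Iic T) ∪ Set.Icc t (t + δ) ⊆ S ∩ Set.Iic (t + δ) := by
        rintro u (⟨hu, huT⟩ | ⟨hu1, hu2⟩)
        · exact ⟨hu, by simp only [Set.mem_Iic] at *; linarith⟩
        · refine ⟨⟨by linarith, ?_⟩, hu2⟩
          have hx := hδf (u - t) (by linarith) (by linarith) (f t x)
          have hy := hδf (u - t) (by linarith) (by linarith) (f t y)
          rw [hadd _ _ (by linarith) (by linarith), sub_add_cancel] at hx hy
          have := dist_triangle4 (f t x) (f u x) (f u y) (f t y)
          rw [dist_comm (f t x) (f u x)] at this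
          linarith
      have hdis : Disjoint (S ∩ Set.Iic T) (Set.Icc t (t + δ)) := by
        rw [Set.disjoint_left]
        rintro u ⟨_, hu⟩ ⟨hu1, _⟩
        simp only [Set.mem_Iic] at hu
        linarith
      refine le_trans ?_ (MeasureTheory.measure_mono hsub)
      rw [MeasureTheory.measure_union hdis measurableSet_Icc, Real.volume_Icc, add_sub_cancel_left]
      push_cast
      rw [add_mul, one_mul]
      gcongr
  by_contra hne
  obtain ⟨n, hn⟩ := ENNReal.exists_nat_mul_gt (ENNReal.ofReal_pos.2 hδ).ne' hne
  obtain ⟨T, _, hT⟩ := key n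
  exact absurd (hT.trans (MeasureTheory.measure_mono Set.inter_subset_left)) (not_le.2 hn)
end

section
/- Let (X,d) be a Polish space, f a continuous semi-flow on X, and let 𝒞 be a nonempty family of nonempty closed f-invariant subsets of X that is totally ordered by inclusion, such that for each C ∈ 𝒞 the restricted semi-flow on C is topologically transitive in the open-set sense: for every pair of nonempty relatively open subsets U, V of C there exist t ≥ 1 and v ∈ V with f^t(v) ∈ U. Then F = closure(⋃_{C ∈ 𝒞} C) is a closed f-invariant subset of X and the restricted semi-flow on F is topologically transitive in the same open-set sense. -/
open Filter Topology Metric Set TopologicalSpace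

/-- `Λ` is invariant under the semi-flow `f`. -/
def InvariantSet {X : Type*} [MetricSpace X] (f : ℝ → X → X) (Λ : Set X) : Prop :=
  ∀ t ≥ (0:ℝ), ∀ x ∈ Λ, f t x ∈ Λ

/-- the closure of the union of a chain of transitive closed
invariant sets is a transitive closed invariant set. -/
theorem chain_union_transitive {X : Type*} [MetricSpace X] [CompleteSpace X]
    [SeparableSpace X] (f : ℝ → X → X) (hf : IsSemiflow f)
    (𝒞 : Set (Set X)) (hne : 𝒞.Nonempty)
    (hC : ∀ C ∈ 𝒞, C.Nonempty ∧ IsClosed C ∧ InvariantSet f C)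
    (hchain : ∀ C₁ ∈ 𝒞, ∀ C₂ ∈ 𝒞, C₁ ⊆ C₂ ∨ C₂ ⊆ C₁)
    (htr : ∀ C ∈ 𝒞, ∀ U V : Set X, IsOpen U → IsOpen V →
      (U ∩ C).Nonempty → (V ∩ C).Nonempty →
      ∃ t : ℝ, 1 ≤ t ∧ ∃ v ∈ V ∩ C, f t v ∈ U ∩ C) :
    IsClosed (closure (⋃ C ∈ 𝒞, C)) ∧
    InvariantSet f (closure (⋃ C ∈ 𝒞, C)) ∧
    ∀ U V : Set X, IsOpen U → IsOpen V →
      (U ∩ closure (⋃ C ∈ 𝒞, C)).Nonempty → (V ∩ closure (⋃ C ∈ 𝒞, C)).Nonempty →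
      ∃ t : ℝ, 1 ≤ t ∧ ∃ v ∈ V ∩ closure (⋃ C ∈ 𝒞, C),
        f t v ∈ U ∩ closure (⋃ C ∈ 𝒞, C) := by
  refine ⟨isClosed_closure, ?_, ?_⟩
  · intro t ht x hx
    have hcont : Continuous (f t) := by
      have h : Continuous (fun x : X => ((t, x) : ℝ × X)) := by fun_prop
      exact hf.1.comp_continuous h (fun x => ⟨ht, Set.mem_univ _⟩)
    refine map_mem_closure hcont hx ?_
    intro y hy
    simp only [Set.mem_iUnion] at hy ⊢
    obtain ⟨C, hCm, hyC⟩ := hy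
    exact ⟨C, hCm, (hC C hCm).2.2 t ht y hyC⟩
  · intro U V hU hV hUn hVn
    obtain ⟨x, hxU, hx⟩ := hUn
    obtain ⟨y, hyV, hy⟩ := hVn
    obtain ⟨x', hx'U, hx'⟩ := mem_closure_iff.1 hx U hU hxU
    obtain ⟨y', hy'V, hy'⟩ := mem_closure_iff.1 hy V hV hyV
    simp only [Set.mem_iUnion] at hx' hy'
    obtain ⟨C₁, h₁, hx₁⟩ := hx'
    obtain ⟨C₂, h₂, hy₂⟩ := hy'
    obtain ⟨C, hCm, hxC, hyC⟩ : ∃ C ∈ 𝒞, x' ∈ C ∧ y' ∈ C := by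
      rcases hchain C₁ h₁ C₂ h₂ with h | h
      · exact ⟨C₂, h₂, h hx₁, hy₂⟩
      · exact ⟨C₁, h₁, hx₁, h hy₂⟩
    have hsub : C ⊆ closure (⋃ C ∈ 𝒞, C) :=
      (Set.subset_biUnion_of_mem (u := fun C : Set X => C) hCm).trans subset_closure
    obtain ⟨t, ht, v, hv, hfv⟩ := htr C hCm U V hU hV ⟨x', hx'U, hxC⟩ ⟨y', hy'V, hyC⟩
    exact ⟨t, ht, v, ⟨hv.1, hsub hv.2⟩, hfv.1, hsub hfv.2⟩
end

section
/- Let (X,d) be a Polish space and f a continuous semi-flow on X such that f is topologically quasi-transitive and the Birkhoff recurrent points of f are dense in X. Then the following are equivalent: (i) there exist x, y ∈ X with closure(O₊(f,x)) ∩ closure(O₊(f,y)) = ∅; (ii) (X,f) is not minimal, i.e., there exists y ∈ X with closure(O₊(f,y)) ≠ X. -/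
open Filter Topology Metric Set TopologicalSpace

theorem posOrbit_closure_sub_s18 {X : Type*} [MetricSpace X] (f : ℝ → X → X) (hf : IsSemiflow f)
    {y z : X} (hz : z ∈ closure (posOrbit f y)) :
    closure (posOrbit f z) ⊆ closure (posOrbit f y) := by
  obtain ⟨hc, -, hs⟩ := hf
  refine closure_minimal ?_ isClosed_closure
  rintro _ ⟨t, ht, rfl⟩
  have ht' : (0:ℝ) ≤ t := ht
  have hcont : Continuous (f t) := by
    have := hc.comp_continuous (f := fun x : X => (t, x)) (by fun_prop)
      (fun x => ⟨ht, Set.mem_univ x⟩)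
    exact this
  refine map_mem_closure hcont hz ?_
  rintro _ ⟨s, hs0, rfl⟩
  have hs0' : (0:ℝ) ≤ s := hs0
  refine ⟨t + s, add_nonneg ht' hs0', ?_⟩
  exact (hs t s ht' hs0' y).symm

theorem birkhoff_mem_closure {X : Type*} [MetricSpace X] (f : ℝ → X → X) (hf : IsSemiflow f)
    {x z : X} (hx : BirkhoffRecurrent f x) (hz : z ∈ closure (posOrbit f x)) :
    x ∈ closure (posOrbit f z) := by
  obtain ⟨hc, h0, hs⟩ := hf
  rw [Metric.mem_closure_iff]
  intro ε hε
  obtain ⟨T, hT, H⟩ := hx (ε / 2) (half_pos hε)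
  obtain ⟨u, hu, hlim⟩ := mem_closure_iff_seq_limit.1 hz
  choose s hs0 hsu using hu
  have hs0' : ∀ n, 0 ≤ s n := hs0
  have key : ∀ n, ∃ t ∈ Set.Icc (0:ℝ) T, dist x (f t (u n)) < ε / 2 := by
    intro n
    obtain ⟨t, h1, h2, h3⟩ := H (s n) (hs0' n) 0 le_rfl
    refine ⟨t - s n, ⟨by linarith, by linarith⟩, ?_⟩
    rw [← hsu n]
    show dist x (f (t - s n) (f (s n) x)) < ε / 2
    rw [hs _ _ (by linarith) (hs0' n), sub_add_cancel]
    rwa [h0] at h3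
  choose t ht hd using key
  obtain ⟨a, ha, φ, hφ, hta⟩ := isCompact_Icc.tendsto_subseq ht
  have hca := hc (a, z) ⟨ha.1, Set.mem_univ z⟩
  have hp : Tendsto (fun n => (t (φ n), u (φ n))) atTop (𝓝[Set.Ici 0 ×ˢ Set.univ] (a, z)) := by
    refine tendsto_nhdsWithin_iff.2 ⟨hta.prodMk_nhds (hlim.comp hφ.tendsto_atTop), ?_⟩
    exact Eventually.of_forall fun n => ⟨(ht (φ n)).1, Set.mem_univ _⟩
  have hl : Tendsto (fun n => f (t (φ n)) (u (φ n))) atTop (𝓝 (f a z)) := hca.tendsto.comp hp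
  refine ⟨f a z, ⟨a, ha.1, rfl⟩, ?_⟩
  have := le_of_tendsto (tendsto_const_nhds.dist hl : Tendsto (fun n => dist x _) _ _)
    (Eventually.of_forall fun n => (hd (φ n)).le)
  linarith

/-- under quasi-transitivity and density of Birkhoff recurrent
points, the existence of two far-away motions is equivalent to
non-minimality. -/
theorem far_away_iff_not_minimal {X : Type*} [MetricSpace X] [CompleteSpace X]
    [SeparableSpace X] (f : ℝ → X → X) (hf : IsSemiflow f)
    (h1 : QuasiTransitive f) (h2 : Dense {x : X | BirkhoffRecurrent f x}) :
    (∃ x y : X, closure (posOrbit f x) ∩ closure (posOrbit f y) = ∅) ↔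
    (∃ y : X, closure (posOrbit f y) ≠ Set.univ) := by
  constructor
  · rintro ⟨x, y, h⟩
    refine ⟨x, fun hx => ?_⟩
    have hy : y ∈ closure (posOrbit f y) := subset_closure ⟨0, Set.self_mem_Ici, hf.2.1 y⟩
    rw [hx, Set.univ_inter] at h
    rw [h] at hy
    exact hy
  · rintro ⟨y, hy⟩
    by_contra hcon
    push Not at hcon
    apply hy
    have hsub : {x : X | BirkhoffRecurrent f x} ⊆ closure (posOrbit f y) := by
      intro x hx
      obtain ⟨z, hzx, hzy⟩ := Set.nonempty_iff_ne_empty.2 (by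
        first | exact hcon x y | exact (hcon x y).ne_empty)
      exact posOrbit_closure_sub_s18 f hf hzy (birkhoff_mem_closure f hf hx hzx)
    have := closure_minimal hsub isClosed_closure
    rw [h2.closure_eq] at this
    exact Set.univ_subset_iff.1 this
end
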